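/- Let n ≥ 3 and consider the two-dimensional semi-staggered Stokes discretization with B = [B_x; B_y], B_x = (1/(4h))·(G ⊗ H), B_y = (1/(4h))·(H ⊗ G), h = 1/n, A = I_2 ⊗ Δ, Δ = B_x B_xᵀ + B_y B_yᵀ. Then 1 is an eigenvalue of the Schur complement S = Bᵀ A⁻¹ B with multiplicity exactly (n−2)², i.e., dim ker(S − I) = (n−2)². -/

import Mathlib

open Matrix
open scoped Kronecker

def Emat (n : ℕ) : Matrix (Fin (n - 1)) (Fin n) ℝ :=
  Matrix.of fun i j => if (j : ℕ) = (i : ℕ) + 1 then 1 else 0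

def Zmat (n : ℕ) : Matrix (Fin (n - 1)) (Fin n) ℝ :=
  Matrix.of fun i j => if (j : ℕ) = (i : ℕ) then 1 else 0

def Gmat (n : ℕ) : Matrix (Fin (n - 1)) (Fin n) ℝ := Emat n - Zmat n

def Hmat (n : ℕ) : Matrix (Fin (n - 1)) (Fin n) ℝ := Emat n + Zmat n

/-
Let `C = [By; -Bx]ᵀ` be the discrete curl. Since `Bx Byᵀ = By Bxᵀ`, the vector Laplacian splits as
`A = B Bᵀ + Cᵀ C`. The kernels of `Bᵀ A⁻¹ B - 1` and `A⁻¹ B Bᵀ - 1 = -A⁻¹ Cᵀ C` have the same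
dimension, so the multiplicity sought is `dim ker C`. By rank-nullity for `C` and `Cᵀ`, it equals
`2 (n - 1)² - n² + dim ker Cᵀ`, and `ker Cᵀ = ker Bx ∩ ker By` is spanned by the indicators of the
two colours of the checkerboard, whence `2 (n - 1)² - n² + 2 = (n - 2)²`.
-/

section SchurComplement

theorem finrank_ker_comp_sub_id_comm {R V W : Type*} [Ring R] [AddCommGroup V] [AddCommGroup W]
    [Module R V] [Module R W] (f : V →ₗ[R] W) (g : W →ₗ[R] V) :
    Module.finrank R (LinearMap.ker (g ∘ₗ f - LinearMap.id)) =
      Module.finrank R (LinearMap.ker (f ∘ₗ g - LinearMap.id)) := by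
  have mem_ker_gf (v : V) : v ∈ LinearMap.ker (g ∘ₗ f - LinearMap.id) ↔ g (f v) = v := by
    simp [sub_eq_zero]
  have mem_ker_fg (w : W) : w ∈ LinearMap.ker (f ∘ₗ g - LinearMap.id) ↔ f (g w) = w := by
    simp [sub_eq_zero]
  refine (LinearEquiv.ofLinearMap
    (f.restrict fun v hv => (mem_ker_fg _).2 (congrArg f ((mem_ker_gf v).1 hv)))
    (g.restrict fun w hw => (mem_ker_gf _).2 (congrArg g ((mem_ker_fg w).1 hw))) ?_ ?_).finrank_eq
  · ext ⟨w, hw⟩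
    exact (mem_ker_fg w).1 hw
  · ext ⟨v, hv⟩
    exact (mem_ker_gf v).1 hv

variable {ι κ K : Type*} [Fintype ι] [Fintype κ]

theorem mulVecLin_mul_sub_one [CommRing K] [DecidableEq ι] (P : Matrix ι κ K) (Q : Matrix κ ι K) :
    (P * Q - 1).mulVecLin = P.mulVecLin ∘ₗ Q.mulVecLin - LinearMap.id := by
  refine LinearMap.ext fun v => ?_
  simp

theorem finrank_ker_mul_inv_mul_sub_one [CommRing K] [DecidableEq ι] [DecidableEq κ]
    {P : Matrix ι κ K} {Q : Matrix κ ι K} {M : Matrix ι ι K} (hA : IsUnit (P * Q + M)) :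
    Module.finrank K (LinearMap.ker (Q * (P * Q + M)⁻¹ * P - 1).mulVecLin) =
      Module.finrank K (LinearMap.ker M.mulVecLin) := by
  set A := P * Q + M with hA_def
  have hA_det : IsUnit A.det := A.isUnit_iff_isUnit_det.1 hA
  have factor : A⁻¹ * P * Q - 1 = -A⁻¹ * M := by
    rw [eq_sub_of_add_eq' hA_def.symm, Matrix.mul_sub, Matrix.mul_assoc, Matrix.neg_mul,
      Matrix.neg_mul, nonsing_inv_mul A hA_det]
    abel
  have ker_neg_inv : LinearMap.ker (-A⁻¹).mulVecLin = ⊥ :=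
    LinearMap.ker_eq_bot.2 (mulVec_injective_of_isUnit (isUnit_nonsing_inv_iff.2 hA).neg)
  rw [Matrix.mul_assoc, mulVecLin_mul_sub_one, finrank_ker_comp_sub_id_comm,
    ← mulVecLin_mul_sub_one, factor, mulVecLin_mul, LinearMap.ker_comp_of_ker_eq_bot _ ker_neg_inv]

theorem finrank_ker_transpose_add_card [Field K] (M : Matrix ι κ K) :
    Module.finrank K (LinearMap.ker Mᵀ.mulVecLin) + Fintype.card κ =
      Module.finrank K (LinearMap.ker M.mulVecLin) + Fintype.card ι := by
  have rank_nullity := M.mulVecLin.finrank_range_add_finrank_ker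
  have rank_nullity_transpose := Mᵀ.mulVecLin.finrank_range_add_finrank_ker
  have rank_eq : Module.finrank K (LinearMap.range Mᵀ.mulVecLin) =
      Module.finrank K (LinearMap.range M.mulVecLin) := M.rank_transpose
  simp only [Module.finrank_fintype_fun_eq_card] at rank_nullity rank_nullity_transpose
  omega

variable [Field K] [LinearOrder K] [IsStrictOrderedRing K]

theorem ker_mulVecLin_mul_transpose_self (M : Matrix ι κ K) :
    LinearMap.ker (M * Mᵀ).mulVecLin = LinearMap.ker Mᵀ.mulVecLin :=
  ker_mulVecLin_transpose_mul_self Mᵀ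

theorem isUnit_mul_transpose_self [DecidableEq ι] {M : Matrix ι κ K} {R : Matrix κ ι K}
    (hR : M * R = 1) : IsUnit (M * Mᵀ) := by
  have left_inv : Rᵀ * Mᵀ = 1 := by rw [← transpose_mul, hR, transpose_one]
  rw [← mulVec_injective_iff_isUnit]
  refine LinearMap.ker_eq_bot.1
    ((ker_mulVecLin_mul_transpose_self M).trans (LinearMap.ker_eq_bot.2 ?_))
  exact Function.LeftInverse.injective (g := Rᵀ.mulVec) fun v => by
    rw [mulVecLin_apply, mulVec_mulVec, left_inv, one_mulVec]

theorem isUnit_mul_transpose_add_mul_transpose [DecidableEq ι] {X Y : Matrix ι κ K}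
    {R : Matrix κ ι K} (hR : X * R = 1) : IsUnit (X * Xᵀ + Y * Yᵀ) := by
  rw [← fromCols_mul_fromRows, ← transpose_fromCols]
  refine isUnit_mul_transpose_self (R := fromRows R 0) ?_
  rw [fromCols_mul_fromRows, hR, Matrix.mul_zero, add_zero]

theorem finrank_ker_schur_sub_one_add_card [DecidableEq ι] [DecidableEq κ]
    {P M : Matrix ι κ K} (hA : IsUnit (P * Pᵀ + M * Mᵀ)) :
    Module.finrank K (LinearMap.ker (Pᵀ * (P * Pᵀ + M * Mᵀ)⁻¹ * P - 1).mulVecLin) +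
        Fintype.card κ =
      Module.finrank K (LinearMap.ker M.mulVecLin) + Fintype.card ι := by
  rw [finrank_ker_mul_inv_mul_sub_one hA, ker_mulVecLin_mul_transpose_self,
    finrank_ker_transpose_add_card]

end SchurComplement

section VectorLaplacian

/-- The block column `[X; Y]`, with the two blocks indexed by `Fin 2` as in the matrix `B` of the
discretization. -/
def stackRows {ι κ K : Type*} (X Y : Matrix ι κ K) : Matrix (Fin 2 × ι) κ K :=
  Matrix.of fun p q => if p.1 = 0 then X p.2 q else Y p.2 q

variable {ι κ K : Type*} [Fintype κ]

theorem stackRows_mulVec_eq_zero [Semiring K] {X Y : Matrix ι κ K} {v : κ → K} :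
    stackRows X Y *ᵥ v = 0 ↔ X *ᵥ v = 0 ∧ Y *ᵥ v = 0 := by
  simp [funext_iff, Prod.forall, Fin.forall_fin_two, mulVec, stackRows]

/-- The discrete form of `Δ = grad div + curl curl` for vector fields. -/
theorem one_kronecker_eq_stackRows_mul_transpose_add [CommRing K] {X Y : Matrix ι κ K}
    (hXY : X * Yᵀ = Y * Xᵀ) :
    (1 : Matrix (Fin 2) (Fin 2) K) ⊗ₖ (X * Xᵀ + Y * Yᵀ) =
      stackRows X Y * (stackRows X Y)ᵀ + stackRows Y (-X) * (stackRows Y (-X))ᵀ := by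
  have entry (i j : ι) : ∑ q, X i q * Y j q = ∑ q, Y i q * X j q := congrFun₂ hXY i j
  ext ⟨a, i⟩ ⟨b, j⟩
  fin_cases a <;> fin_cases b <;> simp [stackRows, mul_apply, entry, add_comm]

theorem finrank_ker_stokes_schur_sub_one_add_card [Fintype ι] [DecidableEq ι] [DecidableEq κ]
    [Field K] [LinearOrder K] [IsStrictOrderedRing K] {X Y : Matrix ι κ K}
    (hXY : X * Yᵀ = Y * Xᵀ) (hΔ : IsUnit (X * Xᵀ + Y * Yᵀ)) :
    Module.finrank K (LinearMap.ker ((stackRows X Y)ᵀ *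
          ((1 : Matrix (Fin 2) (Fin 2) K) ⊗ₖ (X * Xᵀ + Y * Yᵀ))⁻¹ * stackRows X Y - 1).mulVecLin) +
        Fintype.card κ =
      Module.finrank K ↥(LinearMap.ker X.mulVecLin ⊓ LinearMap.ker Y.mulVecLin) +
        2 * Fintype.card ι := by
  have hA : IsUnit ((1 : Matrix (Fin 2) (Fin 2) K) ⊗ₖ (X * Xᵀ + Y * Yᵀ)) := by
    rw [isUnit_iff_isUnit_det] at hΔ ⊢
    simpa [det_kronecker] using hΔ
  have ker_curl : LinearMap.ker (stackRows Y (-X)).mulVecLin =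
      LinearMap.ker X.mulVecLin ⊓ LinearMap.ker Y.mulVecLin := by
    ext v
    simp [stackRows_mulVec_eq_zero, neg_mulVec, and_comm]
  rw [one_kronecker_eq_stackRows_mul_transpose_add hXY] at hA ⊢
  rw [finrank_ker_schur_sub_one_add_card hA, ker_curl, Fintype.card_prod, Fintype.card_fin]

end VectorLaplacian

section Differences

variable {n : ℕ}

theorem Emat_mulVec_apply (f : Fin n → ℝ) (i : Fin (n - 1)) :
    (Emat n *ᵥ f) i = f ⟨i + 1, by omega⟩ := by
  have row_eq : Emat n i = Pi.single ⟨i + 1, by omega⟩ 1 := by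
    ext j
    simp [Emat, Pi.single_apply, Fin.ext_iff]
  rw [mulVec, row_eq, single_one_dotProduct]

theorem Zmat_mulVec_apply (f : Fin n → ℝ) (i : Fin (n - 1)) :
    (Zmat n *ᵥ f) i = f ⟨i, by omega⟩ := by
  have row_eq : Zmat n i = Pi.single ⟨i, by omega⟩ 1 := by
    ext j
    simp [Zmat, Pi.single_apply, Fin.ext_iff]
  rw [mulVec, row_eq, single_one_dotProduct]

theorem Gmat_mulVec_apply (f : Fin n → ℝ) (i : Fin (n - 1)) :
    (Gmat n *ᵥ f) i = f ⟨i + 1, by omega⟩ - f ⟨i, by omega⟩ := by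
  rw [Gmat, sub_mulVec, Pi.sub_apply, Emat_mulVec_apply, Zmat_mulVec_apply]

theorem Hmat_mulVec_apply (f : Fin n → ℝ) (i : Fin (n - 1)) :
    (Hmat n *ᵥ f) i = f ⟨i + 1, by omega⟩ + f ⟨i, by omega⟩ := by
  rw [Hmat, add_mulVec, Pi.add_apply, Emat_mulVec_apply, Zmat_mulVec_apply]

theorem Emat_mul_transpose_self : Emat n * (Emat n)ᵀ = 1 := by
  ext i k
  exact (Emat_mulVec_apply (Emat n k) i).trans (by simp [Emat, one_apply, Fin.ext_iff])

theorem Zmat_mul_transpose_self : Zmat n * (Zmat n)ᵀ = 1 := by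
  ext i k
  exact (Zmat_mulVec_apply (Zmat n k) i).trans (by simp [Zmat, one_apply, Fin.ext_iff, eq_comm])

theorem Gmat_mul_transpose_Hmat : Gmat n * (Hmat n)ᵀ = -(Hmat n * (Gmat n)ᵀ) := by
  simp only [Gmat, Hmat, Matrix.sub_mul, Matrix.mul_add, Matrix.add_mul, Matrix.mul_sub,
    transpose_add, transpose_sub, Emat_mul_transpose_self, Zmat_mul_transpose_self]
  abel

theorem exists_Emat_add_smul_Zmat_mul_eq_one (n : ℕ) (t : ℝ) :
    ∃ R : Matrix (Fin n) (Fin (n - 1)) ℝ, (Emat n + t • Zmat n) * R = 1 := by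
  let R : Matrix (Fin n) (Fin (n - 1)) ℝ :=
    Matrix.of fun j i => if (i : ℕ) < j then (-t) ^ ((j : ℕ) - 1 - i) else 0
  refine ⟨R, ?_⟩
  ext i k
  have entry : ((Emat n + t • Zmat n) * R) i k =
      R ⟨i + 1, by omega⟩ k + t * R ⟨i, by omega⟩ k := by
    change ((Emat n + t • Zmat n) *ᵥ fun j => R j k) i = _
    rw [add_mulVec, smul_mulVec, Pi.add_apply, Pi.smul_apply, Emat_mulVec_apply,
      Zmat_mulVec_apply, smul_eq_mul]
  rw [entry]
  rcases lt_trichotomy (k : ℕ) i with hlt | heq | hgt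
  · obtain ⟨d, hd⟩ := Nat.exists_eq_add_of_lt hlt
    have succ_exponent : (i : ℕ) - k = d + 1 := by omega
    have exponent : (i : ℕ) - 1 - k = d := by omega
    have hik : i ≠ k := by omega
    simp [R, hlt, hlt.trans (Nat.lt_succ_self _), succ_exponent, exponent, hik, pow_succ']
  · obtain rfl : k = i := Fin.ext heq
    simp [R]
  · have hik : i ≠ k := by omega
    simp [R, hgt.not_gt, hgt.not_ge, hik]

theorem exists_Gmat_mul_eq_one (n : ℕ) :
    ∃ R : Matrix (Fin n) (Fin (n - 1)) ℝ, Gmat n * R = 1 := by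
  simpa [Gmat, sub_eq_add_neg] using exists_Emat_add_smul_Zmat_mul_eq_one n (-1)

theorem exists_Hmat_mul_eq_one (n : ℕ) :
    ∃ R : Matrix (Fin n) (Fin (n - 1)) ℝ, Hmat n * R = 1 := by
  simpa [Hmat] using exists_Emat_add_smul_Zmat_mul_eq_one n 1

end Differences

section Gradient

theorem kronecker_mulVec_apply {R ι κ ι' κ' : Type*} [CommSemiring R] [Fintype κ] [Fintype κ']
    (M : Matrix ι κ R) (N : Matrix ι' κ' R) (v : κ × κ' → R) (i : ι) (k : ι') :
    ((M ⊗ₖ N) *ᵥ v) (i, k) = (M *ᵥ fun j => (N *ᵥ fun l => v (j, l)) k) i := by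
  simp [mulVec, dotProduct, Fintype.sum_prod_type, Finset.mul_sum, mul_assoc]

/-- The matrix `B_x` of the discretization, with an arbitrary factor `c` in place of `1 / (4h)`. -/
def gradX (n : ℕ) (c : ℝ) : Matrix (Fin (n - 1) × Fin (n - 1)) (Fin n × Fin n) ℝ :=
  c • (Gmat n ⊗ₖ Hmat n)

/-- The matrix `B_y` of the discretization, with an arbitrary factor `c` in place of `1 / (4h)`. -/
def gradY (n : ℕ) (c : ℝ) : Matrix (Fin (n - 1) × Fin (n - 1)) (Fin n × Fin n) ℝ :=
  c • (Hmat n ⊗ₖ Gmat n)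

theorem gradX_mul_transpose_gradY (n : ℕ) (c : ℝ) :
    gradX n c * (gradY n c)ᵀ = gradY n c * (gradX n c)ᵀ := by
  have neg_kronecker_neg (M N : Matrix (Fin (n - 1)) (Fin (n - 1)) ℝ) : (-M) ⊗ₖ N = M ⊗ₖ (-N) := by
    ext
    simp
  simp only [gradX, gradY, transpose_smul, ← kroneckerMap_transpose, Matrix.smul_mul,
    Matrix.mul_smul, ← mul_kronecker_mul, Gmat_mul_transpose_Hmat, neg_kronecker_neg]

theorem exists_gradX_mul_eq_one (n : ℕ) {c : ℝ} (hc : c ≠ 0) :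
    ∃ R : Matrix (Fin n × Fin n) (Fin (n - 1) × Fin (n - 1)) ℝ, gradX n c * R = 1 := by
  obtain ⟨R, hR⟩ := exists_Gmat_mul_eq_one n
  obtain ⟨S, hS⟩ := exists_Hmat_mul_eq_one n
  refine ⟨c⁻¹ • (R ⊗ₖ S), ?_⟩
  rw [gradX, Matrix.smul_mul, Matrix.mul_smul, smul_inv_smul₀ hc, ← mul_kronecker_mul, hR, hS,
    one_kronecker_one]

variable {n : ℕ}

theorem gradX_mulVec_eq_zero_and_gradY_mulVec_eq_zero {c : ℝ} (hc : c ≠ 0)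
    {p : Fin n × Fin n → ℝ} :
    gradX n c *ᵥ p = 0 ∧ gradY n c *ᵥ p = 0 ↔
      (∀ i k (hi : i + 1 < n) (hk : k + 1 < n),
        p (⟨i + 1, hi⟩, ⟨k + 1, hk⟩) = p (⟨i, by omega⟩, ⟨k, by omega⟩)) ∧
      ∀ i k (hi : i + 1 < n) (hk : k + 1 < n),
        p (⟨i + 1, hi⟩, ⟨k, by omega⟩) = p (⟨i, by omega⟩, ⟨k + 1, hk⟩) := by
  simp only [gradX, gradY, smul_mulVec, smul_eq_zero_iff_right hc, funext_iff, Prod.forall,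
    kronecker_mulVec_apply, Gmat_mulVec_apply, Hmat_mulVec_apply, Pi.zero_apply]
  constructor
  · rintro ⟨hGH, hHG⟩
    constructor <;> intro i k hi hk <;>
      linarith [hGH ⟨i, by omega⟩ ⟨k, by omega⟩, hHG ⟨i, by omega⟩ ⟨k, by omega⟩]
  · rintro ⟨diagonal, antidiagonal⟩
    constructor <;> intro i k <;>
      linarith [diagonal i k (by omega) (by omega), antidiagonal i k (by omega) (by omega)]

/-- The checkerboard colouring of the `n × n` grid: the parity of the sum of the coordinates. The
functions of the colour are the spurious pressure modes of the discretization. -/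
def checkerboard (n : ℕ) (x : Fin n × Fin n) : Fin 2 :=
  Fin.ofNat 2 (x.1 + x.2)

theorem checkerboard_surjective (hn : 2 ≤ n) : Function.Surjective (checkerboard n) := fun c =>
  ⟨(⟨0, by omega⟩, ⟨c, by omega⟩), by simp [checkerboard]⟩

theorem factorsThrough_checkerboard {α : Type*} {p : Fin n × Fin n → α}
    (diagonal : ∀ i k (hi : i + 1 < n) (hk : k + 1 < n),
      p (⟨i + 1, hi⟩, ⟨k + 1, hk⟩) = p (⟨i, by omega⟩, ⟨k, by omega⟩))
    (antidiagonal : ∀ i k (hi : i + 1 < n) (hk : k + 1 < n),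
      p (⟨i + 1, hi⟩, ⟨k, by omega⟩) = p (⟨i, by omega⟩, ⟨k + 1, hk⟩)) :
    Function.FactorsThrough p (checkerboard n) := by
  have first_row (k : ℕ) (hk : k < n) :
      p (⟨0, by omega⟩, ⟨k, hk⟩) = p (⟨0, by omega⟩, ⟨k % 2, by omega⟩) := by
    induction k using Nat.twoStepInduction with
    | zero => rfl
    | one => rfl
    | more k ih _ =>
      rw [← antidiagonal 0 (k + 1) (by omega) hk, diagonal 0 k (by omega) (by omega),
        ih (by omega)]
      simp only [Nat.add_mod_right]
  have eq_first_row (i : ℕ) (hi : i < n) : ∀ (k : ℕ) (hk : k < n),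
      p (⟨i, hi⟩, ⟨k, hk⟩) = p (⟨0, by omega⟩, ⟨(i + k) % 2, by omega⟩) := by
    induction i with
    | zero => simpa using first_row
    | succ i ih =>
      intro k hk
      rcases Nat.lt_or_ge (k + 1) n with hk' | hk'
      · rw [antidiagonal i k hi hk', ih (by omega)]
        simp only [Nat.add_assoc, Nat.add_comm 1]
      · obtain ⟨l, rfl⟩ : ∃ l, k = l + 1 := Nat.exists_eq_add_of_le' (by omega)
        rw [diagonal i l hi hk, ih (by omega)]
        congr 3
        omega
  rintro ⟨i, k⟩ ⟨j, l⟩ same_colour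
  have same_parity : ((i : ℕ) + k) % 2 = (j + l) % 2 := congrArg Fin.val same_colour
  rw [eq_first_row i i.2 k k.2, eq_first_row j j.2 l l.2]
  simp only [same_parity]

theorem ker_gradX_inf_ker_gradY {c : ℝ} (hc : c ≠ 0) :
    LinearMap.ker (gradX n c).mulVecLin ⊓ LinearMap.ker (gradY n c).mulVecLin =
      LinearMap.range (LinearMap.funLeft ℝ ℝ (checkerboard n)) := by
  ext p
  rw [Submodule.mem_inf, LinearMap.mem_ker, LinearMap.mem_ker, mulVecLin_apply, mulVecLin_apply,
    gradX_mulVec_eq_zero_and_gradY_mulVec_eq_zero hc]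
  constructor
  · rintro ⟨diagonal, antidiagonal⟩
    obtain ⟨q, rfl⟩ := (Function.factorsThrough_iff p).1
      (factorsThrough_checkerboard diagonal antidiagonal)
    exact ⟨q, rfl⟩
  · rintro ⟨q, rfl⟩
    constructor <;> intro i k hi hk <;> refine congrArg q (Fin.ext ?_)
    · change (i + 1 + (k + 1)) % 2 = (i + k) % 2
      omega
    · change (i + 1 + k) % 2 = (i + (k + 1)) % 2
      omega

theorem finrank_ker_gradX_inf_ker_gradY (hn : 2 ≤ n) {c : ℝ} (hc : c ≠ 0) :
    Module.finrank ℝ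
      ↥(LinearMap.ker (gradX n c).mulVecLin ⊓ LinearMap.ker (gradY n c).mulVecLin) = 2 := by
  rw [ker_gradX_inf_ker_gradY hc, LinearMap.finrank_range_of_inj
    (LinearMap.funLeft_injective_of_surjective ℝ ℝ _ (checkerboard_surjective hn)),
    Module.finrank_fintype_fun_eq_card, Fintype.card_fin]

end Gradient

theorem stmt19_general {n : ℕ} (hn : 2 ≤ n) {c : ℝ} (hc : c ≠ 0) :
    Module.finrank ℝ (LinearMap.ker ((stackRows (gradX n c) (gradY n c))ᵀ *
      ((1 : Matrix (Fin 2) (Fin 2) ℝ) ⊗ₖ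
        (gradX n c * (gradX n c)ᵀ + gradY n c * (gradY n c)ᵀ))⁻¹ *
      stackRows (gradX n c) (gradY n c) - 1).mulVecLin) = (n - 2) ^ 2 := by
  obtain ⟨R, hR⟩ := exists_gradX_mul_eq_one n hc
  have dim_count := finrank_ker_stokes_schur_sub_one_add_card (gradX_mul_transpose_gradY n c)
    (isUnit_mul_transpose_add_mul_transpose hR)
  rw [finrank_ker_gradX_inf_ker_gradY hn hc] at dim_count
  simp only [Fintype.card_prod, Fintype.card_fin] at dim_count
  obtain ⟨m, rfl⟩ := Nat.exists_eq_add_of_le' hn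
  simp only [Nat.add_sub_cancel, Nat.add_one_sub_one] at dim_count ⊢
  linarith

/-- for the 2D semi-staggered Stokes discretization, `1` is an eigenvalue
of the Schur complement `S = Bᵀ A⁻¹ B` with multiplicity exactly `(n−2)²`, i.e.
`dim ker(S − I) = (n−2)²`. -/
theorem stmt19 (n : ℕ) (hn : 3 ≤ n) (h : ℝ) (hh : h = 1 / n)
    (Bx By : Matrix (Fin (n - 1) × Fin (n - 1)) (Fin n × Fin n) ℝ)
    (hBx : Bx = (1 / (4 * h)) • (Gmat n ⊗ₖ Hmat n))
    (hBy : By = (1 / (4 * h)) • (Hmat n ⊗ₖ Gmat n))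
    (B : Matrix ((Fin 2) × (Fin (n - 1) × Fin (n - 1))) (Fin n × Fin n) ℝ)
    (hB : B = Matrix.of fun p q => if p.1 = 0 then Bx p.2 q else By p.2 q)
    (Δ : Matrix (Fin (n - 1) × Fin (n - 1)) (Fin (n - 1) × Fin (n - 1)) ℝ)
    (hΔ : Δ = Bx * Bxᵀ + By * Byᵀ)
    (A : Matrix ((Fin 2) × (Fin (n - 1) × Fin (n - 1)))
          ((Fin 2) × (Fin (n - 1) × Fin (n - 1))) ℝ)
    (hA : A = (1 : Matrix (Fin 2) (Fin 2) ℝ) ⊗ₖ Δ) :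
    Module.finrank ℝ
        (LinearMap.ker (Bᵀ * A⁻¹ * B - 1).mulVecLin) = (n - 2) ^ 2 := by
  subst hA hΔ hB hBx hBy
  exact stmt19_general (by omega) (by simpa [hh] using (by omega : n ≠ 0))
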